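/- arXiv:2302.13420 — 3 statements merged into one kernel-verified Lean document; each statement's English description precedes it below -/
import Mathlib

section
/- Let K be a field with algebraic closure K̄, and let F ∈ K[x,y,z] be homogeneous of degree d ≥ 3 defining a plane curve D whose unique singular point over K̄ is P₀ = [0:0:1]. Let f(x,y) = F(x,y,1), so that f has no constant or linear terms, and let A₂(x,y) be the homogeneous degree-2 component of f. If A₂ cannot be written as L(x,y)² for a linear form L over K̄ (equivalently, A₂ = 0 has exactly two solutions in ℙ¹(K̄)), then F is irreducible over K̄. -/
/-!
Suppose `F = G * H` with `deg G = m > 0` and `deg H = n > 0`. A common zero of `G` and `H` is a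
singular point of `F`, so the curves `G = 0` and `H = 0` meet at most at `P₀ = [0:0:1]`. Regard `G`
and `H` as polynomials in `z`: their resultant is a binary form in `x, y`, and wherever it vanishes
the two polynomials have a common root or both leading coefficients vanish. The former would be a
common zero away from `P₀`, so the leading coefficients share a zero as soon as the resultant has
positive degree. With formal degrees `m` and `n` the leading coefficients are constants and the
resultant has degree `mn > 0`, so both curves pass through `P₀`. With formal degrees `m - 1` and
`n - 1` they are the linear terms of `G` and `H` at `P₀` and the resultant has degree `mn - 1 > 0`;
hence these linear terms are proportional, and their product `A₂` is a square.
-/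

open MvPolynomial

section Homogeneous

variable {σ R : Type*}

lemma isHomogeneous_totalDegree_of_le_order [CommSemiring R] {p : MvPolynomial σ R}
    (h : p.totalDegree ≤ (p : MvPowerSeries σ R).order) : p.IsHomogeneous p.totalDegree := by
  intro s hs
  rw [Pi.one_def, ← Finsupp.degree_eq_weight_one]
  refine le_antisymm (le_totalDegree (mem_support_iff.mpr hs)) ?_
  have := h.trans (MvPowerSeries.order_le (d := s) (by simpa using hs))
  exact_mod_cast this

lemma order_coe_le_totalDegree [CommSemiring R] {p : MvPolynomial σ R} (hp : p ≠ 0) :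
    (p : MvPowerSeries σ R).order ≤ p.totalDegree := by
  obtain ⟨s, hs⟩ := ne_zero_iff.mp hp
  refine (MvPowerSeries.order_le (d := s) (by simpa using hs)).trans ?_
  exact_mod_cast le_totalDegree (mem_support_iff.mpr hs)

lemma le_order_coe_of_isHomogeneous [CommSemiring R] {p : MvPolynomial σ R} {d : ℕ}
    (hp : p.IsHomogeneous d) : d ≤ (p : MvPowerSeries σ R).order :=
  MvPowerSeries.le_order fun s hs => by
    rw [coeff_coe]
    exact hp.coeff_eq_zero (by exact_mod_cast hs.ne)

lemma isHomogeneous_totalDegree_of_mul [CommSemiring R] [NoZeroDivisors R]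
    {p q : MvPolynomial σ R} {d : ℕ} (h : (p * q).IsHomogeneous d) (h0 : p * q ≠ 0) :
    p.IsHomogeneous p.totalDegree := by
  have hp := left_ne_zero_of_mul h0
  have hq := right_ne_zero_of_mul h0
  have hdeg : p.totalDegree + q.totalDegree = d := by
    rw [← totalDegree_mul_of_isDomain hp hq, h.totalDegree h0]
  have hord := le_order_coe_of_isHomogeneous h
  rw [coe_mul, MvPowerSeries.order_mul, ← hdeg, Nat.cast_add] at hord
  refine isHomogeneous_totalDegree_of_le_order
    ((ENat.add_le_add_iff_right (ENat.natCast_ne_top q.totalDegree)).mp (hord.trans ?_))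
  gcongr
  exact order_coe_le_totalDegree hq

lemma isUnit_of_totalDegree_eq_zero [Field R] {p : MvPolynomial σ R} (hp : p ≠ 0)
    (hdeg : p.totalDegree = 0) : IsUnit p := by
  rw [totalDegree_eq_zero_iff_eq_C] at hdeg
  rw [hdeg] at hp ⊢
  exact (isUnit_iff_ne_zero.mpr (C_ne_zero.mp hp)).map C

lemma irreducible_of_isHomogeneous_of_forall_ne_mul [Field R] {F : MvPolynomial σ R} {d : ℕ}
    (hF : F.IsHomogeneous d) (hF0 : F ≠ 0) (hd : d ≠ 0)
    (h : ∀ (G H : MvPolynomial σ R) (m n : ℕ), G.IsHomogeneous m → H.IsHomogeneous n →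
      m ≠ 0 → n ≠ 0 → m + n = d → F ≠ G * H) :
    Irreducible F := by
  refine ⟨fun hu => hd ?_, fun {G H} hGH => ?_⟩
  · rw [← hF.totalDegree hF0, (isUnit_iff_totalDegree_of_isReduced.mp hu).2]
  · by_contra! ⟨hGu, hHu⟩
    subst hGH
    have hG0 := left_ne_zero_of_mul hF0
    have hH0 := right_ne_zero_of_mul hF0
    refine h G H _ _ (isHomogeneous_totalDegree_of_mul hF hF0)
      (isHomogeneous_totalDegree_of_mul (mul_comm G H ▸ hF) (mul_comm G H ▸ hF0))
      (hGu ∘ isUnit_of_totalDegree_eq_zero hG0) (hHu ∘ isUnit_of_totalDegree_eq_zero hH0) ?_ rfl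
    rw [← totalDegree_mul_of_isDomain hG0 hH0, hF.totalDegree hF0]

lemma eval_smul_of_isHomogeneous [CommSemiring R] {p : MvPolynomial σ R} {d : ℕ}
    (hp : p.IsHomogeneous d) (t : R) (x : σ → R) : eval (t • x) p = t ^ d * eval x p := by
  rw [eval_eq, eval_eq, Finset.mul_sum]
  refine Finset.sum_congr rfl fun s hs => ?_
  simp only [Pi.smul_apply, smul_eq_mul, mul_pow, Finset.prod_mul_distrib,
    Finset.prod_pow_eq_pow_sum, ← hp.degree_eq_sum_deg_support hs]
  ring

lemma eval_aeval_add_X_mul [CommSemiring R] (x y : σ → R) (t : R) (p : MvPolynomial σ R) :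
    (aeval (fun i => Polynomial.C (x i) + Polynomial.X * Polynomial.C (y i)) p).eval t =
      eval (x + t • y) p := by
  rw [← Polynomial.coe_evalRingHom, map_aeval, ← eval₂_id, ← coe_eval₂Hom]
  congr 2
  · ext; simp
  · ext; simp [mul_comm t]

lemma exists_ne_zero_eval_eq_zero_of_isHomogeneous {k : Type*} [Field k] [IsAlgClosed k]
    [Nontrivial σ] {p : MvPolynomial σ k} {d : ℕ} (hp : p.IsHomogeneous d) (hd : d ≠ 0) :
    ∃ x ≠ 0, eval x p = 0 := by
  classical
  -- On the line through the points `x` and `y`, either `p` vanishes at some `x + t • y`, or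
  -- `p (x + t • y)` is a constant `c`; then `p (y + t • x) = c * t ^ d` and so `p y = 0`.
  obtain ⟨i, j, hij⟩ := exists_pair_ne σ
  let x : σ → k := Pi.single i 1
  let y : σ → k := Pi.single j 1
  let f : Polynomial k := aeval (fun l => Polynomial.C (x l) + Polynomial.X * Polynomial.C (y l)) p
  let g : Polynomial k := aeval (fun l => Polynomial.C (y l) + Polynomial.X * Polynomial.C (x l)) p
  by_cases hf : f.degree = 0
  · refine ⟨y, by simp [y], ?_⟩
    obtain ⟨c, hc⟩ : ∃ c, f = Polynomial.C c := ⟨_, Polynomial.eq_C_of_degree_eq_zero hf⟩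
    have hg : g = Polynomial.X ^ d * Polynomial.C c := by
      refine Polynomial.eq_of_infinite_eval_eq _ _
        ((Set.finite_singleton (0 : k)).infinite_compl.mono fun t (ht : t ≠ 0) => ?_)
      have hxy : y + t • x = t • (x + t⁻¹ • y) := by
        rw [smul_add, smul_inv_smul₀ ht, add_comm]
      calc g.eval t = t ^ d * f.eval t⁻¹ := by
            rw [eval_aeval_add_X_mul, hxy, eval_smul_of_isHomogeneous hp, eval_aeval_add_X_mul]
        _ = _ := by simp [hc, mul_comm c]
    calc eval y p = g.eval 0 := by rw [eval_aeval_add_X_mul, zero_smul, add_zero]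
      _ = 0 := by simp [hg, hd]
  · obtain ⟨t, ht⟩ := IsAlgClosed.exists_root f hf
    refine ⟨x + t • y, fun h => ?_, by rw [← eval_aeval_add_X_mul]; exact ht⟩
    simpa [x, y, hij] using congrFun h i

lemma isHomogeneous_det [CommRing R] {ι : Type*} [Fintype ι] [DecidableEq ι]
    {M : Matrix ι ι (MvPolynomial σ R)} {a b : ι → ℕ} {d : ℕ}
    (hM : ∀ i j, M i j ≠ 0 → ∃ e, e + a i = b j ∧ (M i j).IsHomogeneous e)
    (hd : d + ∑ i, a i = ∑ j, b j) : M.det.IsHomogeneous d := by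
  rw [Matrix.det_apply]
  refine IsHomogeneous.sum _ _ _ fun τ _ => ?_
  rw [Units.smul_def, ← mem_homogeneousSubmodule]
  refine zsmul_mem ((mem_homogeneousSubmodule _ _).mpr ?_) _
  by_cases h0 : ∃ j, M (τ j) j = 0
  · obtain ⟨j, hj⟩ := h0
    rw [Finset.prod_eq_zero (f := fun i => M (τ i) i) (Finset.mem_univ j) hj]
    exact isHomogeneous_zero _ _ _
  · push Not at h0
    choose e he hMe using fun j => hM (τ j) j (h0 j)
    have hed : ∑ j, e j = d := by
      have := Finset.sum_congr rfl fun j (_ : j ∈ Finset.univ) => he j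
      rw [Finset.sum_add_distrib, Equiv.sum_comp τ a, ← hd] at this
      exact Nat.add_right_cancel this
    exact hed ▸ IsHomogeneous.prod _ _ _ fun j _ => hMe j

lemma isHomogeneous_resultant [CommRing R] {f g : Polynomial (MvPolynomial σ R)} {p q r s : ℕ}
    (hf : ∀ i j, i + j = p + r → (f.coeff i).IsHomogeneous j)
    (hg : ∀ i j, i + j = q + s → (g.coeff i).IsHomogeneous j) :
    (f.resultant g p q).IsHomogeneous (p * q + p * s + r * q) := by
  refine isHomogeneous_det (a := Fin.val)
    (b := Fin.append (fun j : Fin p => q + s + j) fun j : Fin q => p + r + j) (fun i j => ?_) ?_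
  · refine j.addCases (fun j => ?_) fun j => ?_
    · simp only [Polynomial.sylvester, Matrix.of_apply, Fin.addCases_left, Set.mem_Icc,
        Fin.append_left, ite_ne_right_iff]
      exact fun ⟨hij, _⟩ => ⟨q + s + j - i, by omega, by
        rw [if_pos hij]; exact hg _ _ (by omega)⟩
    · simp only [Polynomial.sylvester, Matrix.of_apply, Fin.addCases_right, Set.mem_Icc,
        Fin.append_right, ite_ne_right_iff]
      exact fun ⟨hij, _⟩ => ⟨p + r + j - i, by omega, by
        rw [if_pos hij]; exact hf _ _ (by omega)⟩
  · simp only [Fin.sum_univ_add, Fin.append_left, Fin.append_right, Fin.val_castAdd,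
      Fin.val_natAdd, Finset.sum_add_distrib, Finset.sum_const, Finset.card_univ,
      Fintype.card_fin, smul_eq_mul]
    ring

end Homogeneous

lemma coeff_eq_zero_or_exists_common_root_of_resultant_eq_zero {k : Type*} [Field k]
    [IsAlgClosed k] {f g : Polynomial k} {p q : ℕ} (hf : f.natDegree ≤ p) (hg : g.natDegree ≤ q)
    (h : f.resultant g p q = 0) :
    (f.coeff p = 0 ∧ g.coeff q = 0) ∨ ∃ z, f.eval z = 0 ∧ g.eval z = 0 := by
  wlog hfp : f.coeff p ≠ 0 generalizing f g p q
  · by_cases hgq : g.coeff q = 0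
    · exact .inl ⟨not_not.mp hfp, hgq⟩
    · rw [Polynomial.resultant_comm, mul_eq_zero] at h
      simpa only [and_comm] using this hg hf (h.resolve_left (by simp)) hgq
  right
  obtain rfl : f.natDegree = p := le_antisymm hf (Polynomial.le_natDegree_of_ne_zero hfp)
  obtain ⟨j, rfl⟩ := Nat.exists_eq_add_of_le hg
  rw [Polynomial.resultant_add_right_deg _ _ _ _ _ le_rfl, mul_eq_zero] at h
  have hcoprime :=
    (Polynomial.resultant_eq_zero_iff.mp (h.resolve_left (pow_ne_zero _ hfp))).2
  rw [Polynomial.isCoprime_iff_aeval_ne_zero_of_isAlgClosed k k] at hcoprime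
  push Not at hcoprime
  simpa only [Polynomial.coe_aeval_eq_eval] using hcoprime

section LastVariable

variable {σ R : Type*} [CommSemiring R] {F : MvPolynomial (Option σ) R} {d : ℕ}

lemma natDegree_optionEquivLeft_le_of_isHomogeneous (hF : F.IsHomogeneous d) :
    (optionEquivLeft R σ F).natDegree ≤ d := by
  rw [natDegree_optionEquivLeft]
  exact (degreeOf_le_totalDegree _ _).trans hF.totalDegree_le

lemma eval_optionEquivLeft (q : MvPolynomial σ R) (F : MvPolynomial (Option σ) R) :
    (optionEquivLeft R σ F).eval q = aeval (Option.elim · q X) F := by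
  rw [optionEquivLeft_apply, ← Polynomial.coe_evalRingHom, map_aeval, aeval_def, coe_eval₂Hom]
  congr 1
  · ext : 1
    simp
  · ext o : 1
    cases o <;> simp

variable [Finite σ]

lemma isHomogeneous_coeff_optionEquivLeft {i j : ℕ} (hF : F.IsHomogeneous d) (hij : i + j = d) :
    ((optionEquivLeft R σ F).coeff i).IsHomogeneous j :=
  IsHomogeneous.coeff_isHomogeneous_of_optionEquivLeft_symm (by simpa using hF) i j hij

lemma homogeneousComponent_aeval_elim_one {i j : ℕ} (hF : F.IsHomogeneous d) (hij : i + j = d) :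
    homogeneousComponent j (aeval (Option.elim · 1 X) F : MvPolynomial σ R) =
      (optionEquivLeft R σ F).coeff i := by
  rw [← eval_optionEquivLeft, Polynomial.eval_eq_sum_range'
    (Nat.lt_succ_of_le (natDegree_optionEquivLeft_le_of_isHomogeneous hF)), map_sum]
  simp only [one_pow, mul_one]
  rw [Finset.sum_eq_single i]
  · exact homogeneousComponent_eq_self (isHomogeneous_coeff_optionEquivLeft hF hij)
  · intro l hl hli
    obtain ⟨e, he⟩ := Nat.exists_eq_add_of_le (Nat.lt_succ_iff.mp (Finset.mem_range.mp hl))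
    rw [homogeneousComponent_of_mem (isHomogeneous_coeff_optionEquivLeft hF he.symm),
      if_neg (by omega)]
  · intro hi
    exact absurd (Finset.mem_range.mpr (by omega)) hi

lemma natDegree_optionEquivLeft_le_of_eval_coeff_eq_zero (hF : F.IsHomogeneous (d + 1)) {x : σ → R}
    (hx : eval x ((optionEquivLeft R σ F).coeff (d + 1)) = 0) :
    (optionEquivLeft R σ F).natDegree ≤ d := by
  have hconst := isHomogeneous_coeff_optionEquivLeft hF (add_zero (d + 1))
  rw [← totalDegree_zero_iff_isHomogeneous, totalDegree_eq_zero_iff_eq_C] at hconst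
  rw [hconst, eval_C] at hx
  rw [hx, C_0] at hconst
  exact Polynomial.natDegree_le_pred (natDegree_optionEquivLeft_le_of_isHomogeneous hF) hconst

end LastVariable

/-- Bézout's theorem at `P₀ = [0:⋯:0:1]`, the point of the `P` with `P ∘ some = 0`. A form of degree
`p + r` and degree at most `p` in the last variable has multiplicity at least `r` at `P₀`, and its
`p`-th coefficient then defines the tangent cone. The resultant has degree `(p + r)(q + s) - rs`. -/
lemma exists_ne_zero_eval_coeff_eq_zero_of_forall_common_zero
    {σ k : Type*} [Field k] [IsAlgClosed k] [Finite σ] [Nontrivial σ]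
    {G H : MvPolynomial (Option σ) k} {p q r s : ℕ}
    (hG : G.IsHomogeneous (p + r)) (hH : H.IsHomogeneous (q + s))
    (hp : (optionEquivLeft k σ G).natDegree ≤ p) (hq : (optionEquivLeft k σ H).natDegree ≤ q)
    (hpos : p * q + p * s + r * q ≠ 0)
    (hGH : ∀ P, eval P G = 0 → eval P H = 0 → P ∘ some = 0) :
    ∃ x ≠ 0, eval x ((optionEquivLeft k σ G).coeff p) = 0 ∧
      eval x ((optionEquivLeft k σ H).coeff q) = 0 := by
  obtain ⟨x, hx, hres⟩ := exists_ne_zero_eval_eq_zero_of_isHomogeneous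
    (isHomogeneous_resultant (fun _ _ => isHomogeneous_coeff_optionEquivLeft hG)
      fun _ _ => isHomogeneous_coeff_optionEquivLeft hH) hpos
  rw [← Polynomial.resultant_map_map] at hres
  refine ⟨x, hx, ?_⟩
  rcases coeff_eq_zero_or_exists_common_root_of_resultant_eq_zero
    (Polynomial.natDegree_map_le.trans hp) (Polynomial.natDegree_map_le.trans hq) hres
    with hlead | ⟨z, hGz, hHz⟩
  · simpa only [Polynomial.coeff_map] using hlead
  · rw [← optionEquivLeft_elim_eval] at hGz hHz
    exact absurd (hGH _ hGz hHz) hx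

section PlaneCurve

variable {k : Type*} [Field k]

lemma exists_eq_C_mul_of_eval_eq_zero {L : MvPolynomial (Fin 2) k}
    (hL : L.IsHomogeneous 1) {x : Fin 2 → k} (hx : x ≠ 0) (hLx : eval x L = 0) :
    ∃ c, L = C c * (C (x 1) * X 0 - C (x 0) * X 1) := by
  obtain ⟨u, hu⟩ : ∃ u : Fin 2 → k, L = C (u 0) * X 0 + C (u 1) * X 1 := by
    rw [← mem_homogeneousSubmodule, homogeneousSubmodule_one_eq_span_X,
      Submodule.mem_span_range_iff_exists_fun] at hL
    obtain ⟨u, hu⟩ := hL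
    exact ⟨u, by rw [← hu, Fin.sum_univ_two, smul_eq_C_mul, smul_eq_C_mul]⟩
  have hux : u 0 * x 0 + u 1 * x 1 = 0 := by simpa [hu] using hLx
  by_cases h1 : x 1 = 0
  · have h0 : x 0 ≠ 0 := fun h0 => hx (by ext i; fin_cases i; exacts [h0, h1])
    have hu0 : u 0 = 0 := by simpa [h1, h0] using hux
    refine ⟨-u 1 / x 0, ?_⟩
    rw [hu, hu0, h1, mul_sub, ← mul_assoc, ← mul_assoc, ← C_mul, ← C_mul,
      div_mul_cancel₀ _ h0]
    simp
  · refine ⟨u 0 / x 1, ?_⟩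
    have hu1 : u 1 = -(u 0 / x 1 * x 0) := by
      field_simp
      linear_combination hux
    rw [hu, hu1, mul_sub, ← mul_assoc, ← mul_assoc, ← C_mul, ← C_mul, div_mul_cancel₀ _ h1]
    simp [sub_eq_add_neg]

lemma exists_mul_eq_sq_of_eval_eq_zero [IsAlgClosed k] {L M : MvPolynomial (Fin 2) k}
    (hL : L.IsHomogeneous 1) (hM : M.IsHomogeneous 1) {x : Fin 2 → k} (hx : x ≠ 0)
    (hLx : eval x L = 0) (hMx : eval x M = 0) :
    ∃ a b, L * M = (C a * X 0 + C b * X 1) ^ 2 := by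
  obtain ⟨c, rfl⟩ := exists_eq_C_mul_of_eval_eq_zero hL hx hLx
  obtain ⟨e, rfl⟩ := exists_eq_C_mul_of_eval_eq_zero hM hx hMx
  obtain ⟨w, hw⟩ := IsAlgClosed.exists_pow_nat_eq (c * e) zero_lt_two
  refine ⟨w * x 1, -(w * x 0), ?_⟩
  have hw' : (C w : MvPolynomial (Fin 2) k) ^ 2 = C c * C e := by rw [← C_pow, hw, C_mul]
  simp only [C_mul, C_neg]
  linear_combination (-(C (x 1) * X 0 - C (x 0) * X 1) ^ 2) * hw'

lemma exists_homogeneousComponent_two_mul_eq_sq [IsAlgClosed k]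
    {G H : MvPolynomial (Option (Fin 2)) k} {m n : ℕ}
    (hG : G.IsHomogeneous m) (hH : H.IsHomogeneous n) (hm : m ≠ 0) (hn : n ≠ 0) (hmn : 3 ≤ m + n)
    (hGH : ∀ P, eval P G = 0 → eval P H = 0 → P ∘ some = 0) :
    ∃ a b : k, homogeneousComponent 2 (aeval (Option.elim · 1 X) (G * H)) =
      (C a * X 0 + C b * X 1) ^ 2 := by
  obtain ⟨p, rfl⟩ := Nat.exists_eq_succ_of_ne_zero hm
  obtain ⟨q, rfl⟩ := Nat.exists_eq_succ_of_ne_zero hn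
  obtain ⟨_, -, hG0, hH0⟩ := exists_ne_zero_eval_coeff_eq_zero_of_forall_common_zero
    (r := 0) (s := 0) hG hH (natDegree_optionEquivLeft_le_of_isHomogeneous hG)
    (natDegree_optionEquivLeft_le_of_isHomogeneous hH) (by positivity) hGH
  have hGp := natDegree_optionEquivLeft_le_of_eval_coeff_eq_zero hG hG0
  have hHq := natDegree_optionEquivLeft_le_of_eval_coeff_eq_zero hH hH0
  obtain ⟨x, hx, hGx, hHx⟩ := exists_ne_zero_eval_coeff_eq_zero_of_forall_common_zero
    (r := 1) (s := 1) hG hH hGp hHq (by omega) hGH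
  obtain ⟨a, b, hab⟩ := exists_mul_eq_sq_of_eval_eq_zero
    (isHomogeneous_coeff_optionEquivLeft hG rfl) (isHomogeneous_coeff_optionEquivLeft hH rfl)
    hx hGx hHx
  refine ⟨a, b, ?_⟩
  rw [homogeneousComponent_aeval_elim_one (i := p + q) (hG.mul hH) (by omega), map_mul,
    Polynomial.coeff_mul_add_eq_of_natDegree_le hGp hHq, hab]

theorem irreducibility_criterion_unique_singular_point_general [IsAlgClosed k] {d : ℕ}
    (hd : 3 ≤ d) {F : MvPolynomial (Fin 3) k} (hF : F.IsHomogeneous d)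
    (hsing : ∀ P ≠ 0, (eval P F = 0 ∧ ∀ i, eval P (pderiv i F) = 0) → ∃ c, P = ![0, 0, c])
    (hA2 : ¬ ∃ a b : k, homogeneousComponent 2
        (aeval (![X 0, X 1, 1] : Fin 3 → MvPolynomial (Fin 2) k) F) =
      (C a * X 0 + C b * X 1) ^ 2) :
    Irreducible F := by
  have hF0 : F ≠ 0 := by
    rintro rfl
    exact hA2 ⟨0, 0, by simp⟩
  refine irreducible_of_isHomogeneous_of_forall_ne_mul hF hF0 (by omega) ?_
  rintro G H m n hG hH hm hn rfl rfl
  refine hA2 ?_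
  have hdehom : (![X 0, X 1, 1] : Fin 3 → MvPolynomial (Fin 2) k) =
      (Option.elim · 1 X) ∘ finSuccEquivLast := by
    ext1 i
    fin_cases i <;> rfl
  rw [hdehom, ← aeval_rename, map_mul]
  refine exists_homogeneousComponent_two_mul_eq_sq hG.rename_isHomogeneous
    hH.rename_isHomogeneous hm hn hd fun P hGP hHP => ?_
  rw [eval_rename] at hGP hHP
  by_cases hP : P ∘ finSuccEquivLast = 0
  · exact funext fun i => by simpa using congrFun hP i.castSucc
  · obtain ⟨c, hc⟩ := hsing _ hP
      ⟨by rw [map_mul, hGP, zero_mul], fun i => by simp [hGP, hHP]⟩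
    ext i
    fin_cases i
    exacts [congrFun hc 0, congrFun hc 1]

end PlaneCurve

theorem irreducibility_criterion_unique_singular_point
    (K : Type*) [Field K] (d : ℕ) (hd : 3 ≤ d)
    (F : MvPolynomial (Fin 3) K) (hF : F.IsHomogeneous d)
    -- `[0:0:1]` is the unique singular point of `{F = 0}` over the algebraic closure:
    (hsing : ∀ P : Fin 3 → AlgebraicClosure K, P ≠ 0 →
      ((eval P (MvPolynomial.map (algebraMap K (AlgebraicClosure K)) F) = 0 ∧
        ∀ i : Fin 3,
          eval P (pderiv i (MvPolynomial.map (algebraMap K (AlgebraicClosure K)) F)) = 0)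
        ↔ ∃ c : AlgebraicClosure K, c ≠ 0 ∧ P = ![0, 0, c]))
    -- the quadratic term of `f(x,y) = F(x,y,1)` at the origin is not the square of a
    -- linear form over the algebraic closure:
    (hA2 : ¬ ∃ a b : AlgebraicClosure K,
      homogeneousComponent 2
          (aeval (![X 0, X 1, 1] : Fin 3 → MvPolynomial (Fin 2) (AlgebraicClosure K))
            (MvPolynomial.map (algebraMap K (AlgebraicClosure K)) F))
        = (C a * X 0 + C b * X 1) ^ 2) :
    Irreducible (MvPolynomial.map (algebraMap K (AlgebraicClosure K)) F) :=
  irreducibility_criterion_unique_singular_point_general hd (hF.map _)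
    (fun P hP h => ((hsing P hP).mp h).imp fun _ => And.right) hA2
end

section
/- Let 𝔽_q be a finite field of characteristic p > 3 and let K be an algebraic closure of 𝔽_q. Then the polynomial F = x^{q-1} + y^{q-1} + z^{q-1} - 3(x+y+z)^{q-1}, viewed in K[x,y,z], is irreducible; that is, the curve C it defines is geometrically irreducible. -/
open MvPolynomial

/-!
Suppose `F = G * H` with `G` and `H` nonconstant, write `q - 1` for the degree of `F`, and put
`I = (G, H)`. The factors are homogeneous, and `I` contains all partial derivatives of `F`, so
`x ^ (q - 2) = y ^ (q - 2) = z ^ (q - 2) = 3 * (x + y + z) ^ (q - 2)` modulo `I`.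

On the line `x + y = 0` the form `F` restricts to `2 * (x ^ (q - 1) - z ^ (q - 1))`, which is
squarefree. Hence `G` and `H` have no common factor there, and `x + y` is a nonzerodivisor modulo
`I`. This allows enough cancellation to solve the equations above in the ring `k[x, y, z] / I`
itself, and not only on its points: taking `q`-th powers of the two nontrivial Lagrange resolvents
of `x, y, z` shows that they vanish, so `x = y = z` modulo `I`. (Geometrically, `G` and `H` meet
only at `(1 : 1 : 1)`, and transversally there, which contradicts Bézout's theorem.) Since
`deg G + deg H = q - 1 ≥ 4`, one of the generators of `I` has no linear term at the origin, so the
linear forms `x - y` and `y - z` cannot both lie in `I`.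
-/

open scoped nonZeroDivisors

section NonZeroDivisors

variable {R S : Type*} [CommRing R] [CommRing S]

theorem mem_nonZeroDivisors_of_dvd_pow_of_dvd_pow {d x y : R} {m n : ℕ} (hx : d ∣ x ^ m)
    (hy : d ∣ y ^ n) (hxy : x + y ∈ R⁰) : d ∈ R⁰ := by
  rw [← Ideal.mem_span_singleton] at hx hy
  have hd : d ∣ (x + y) ^ (m + n) :=
    Ideal.mem_span_singleton.mp (Ideal.add_pow_mem_of_pow_mem_of_le _ hx hy (by omega))
  obtain ⟨e, he⟩ := hd
  exact (mul_mem_nonZeroDivisors.mp (he ▸ pow_mem hxy (m + n))).1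

theorem mk_mem_nonZeroDivisors_of_isRelPrime_map [IsDomain S] [DecompositionMonoid S]
    {f : R →+* S} (hf : Function.Surjective f) {t G H : R} (ht : t ∈ R⁰)
    (hker : RingHom.ker f = Ideal.span {t}) (hGH : IsRelPrime (f G) (f H)) (hH : f H ≠ 0) :
    Ideal.Quotient.mk (Ideal.span {G, H}) t ∈ (R ⧸ Ideal.span {G, H})⁰ := by
  have dvd_of_map_eq_zero {a : R} (ha : f a = 0) : t ∣ a := by
    rwa [← Ideal.mem_span_singleton, ← hker, RingHom.mem_ker]
  have hft : f t = 0 := by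
    rw [← RingHom.mem_ker, hker]
    exact Ideal.mem_span_singleton_self t
  rw [mem_nonZeroDivisors_iff_left, Ideal.Quotient.mk_surjective.forall]
  intro P hP
  rw [← map_mul, Ideal.Quotient.eq_zero_iff_mem] at hP
  obtain ⟨A, B, hAB⟩ := Ideal.mem_span_pair.mp hP
  have hrel : f A * f G + f B * f H = 0 := by
    rw [← map_mul, ← map_mul, ← map_add, hAB, map_mul, hft, zero_mul]
  have hdvd : f H ∣ f A :=
    hGH.symm.dvd_of_dvd_mul_right ⟨-f B, by linear_combination hrel⟩
  obtain ⟨c, hc⟩ := hdvd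
  obtain ⟨C, rfl⟩ := hf c
  obtain ⟨A', hA'⟩ : t ∣ A - H * C := dvd_of_map_eq_zero (by rw [map_sub, map_mul, hc, sub_self])
  obtain ⟨B', hB'⟩ : t ∣ B + G * C := dvd_of_map_eq_zero <| mul_left_cancel₀ hH <| by
    rw [map_add, map_mul]
    linear_combination hrel - f G * hc
  rw [Ideal.Quotient.eq_zero_iff_mem, Ideal.mem_span_pair]
  refine ⟨A', B', (mul_cancel_left_mem_nonZeroDivisors ht).mp ?_⟩
  linear_combination hAB - G * hA' - H * hB'

end NonZeroDivisors

section LagrangeResolvent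

variable {Q : Type*} [CommRing Q]

/-- The Lagrange resolvent of `x, y, z` attached to a cube root of unity `ω`. It is used for `ω`
with `ω ^ 2 + ω + 1 = 0`. -/
def lagrangeResolvent (ω x y z : Q) : Q :=
  x + ω * y + ω ^ 2 * z

variable {ω x y z u v w W : Q}

theorem pow_three_eq_one_of_sq_add_self_add_one (hω : ω ^ 2 + ω + 1 = 0) : ω ^ 3 = 1 := by
  linear_combination (ω - 1) * hω

theorem two_mul_lagrangeResolvent_mul (hω : ω ^ 2 + ω + 1 = 0) :
    2 * (lagrangeResolvent ω x y z * lagrangeResolvent (ω ^ 2) x y z) =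
      3 * (x ^ 2 + y ^ 2 + z ^ 2) - (x + y + z) ^ 2 := by
  unfold lagrangeResolvent
  grind

theorem three_mul_lagrangeResolvent_sq (hω : ω ^ 2 + ω + 1 = 0) :
    3 * lagrangeResolvent ω (x ^ 2) (y ^ 2) (z ^ 2) =
      lagrangeResolvent (ω ^ 2) x y z ^ 2 + 2 * (x + y + z) * lagrangeResolvent ω x y z := by
  unfold lagrangeResolvent
  grind

theorem eq_and_eq_of_lagrangeResolvent_eq_zero (h3 : (3 : Q) ∈ Q⁰) (hω : ω ^ 2 + ω + 1 = 0)
    (h₁ : lagrangeResolvent ω x y z = 0) (h₂ : lagrangeResolvent (ω ^ 2) x y z = 0) :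
    x = y ∧ y = z := by
  unfold lagrangeResolvent at h₁ h₂
  constructor <;> exact (mul_cancel_left_mem_nonZeroDivisors h3).mp (by grind)

theorem lagrangeResolvent_pow_char_pow (p r : ℕ) [ExpChar Q p] :
    lagrangeResolvent ω x y z ^ p ^ r =
      lagrangeResolvent (ω ^ p ^ r) (x ^ p ^ r) (y ^ p ^ r) (z ^ p ^ r) := by
  simp only [lagrangeResolvent, add_pow_expChar_pow, mul_pow, pow_right_comm]

theorem eq_zero_of_pow_eq_conjugate_sq {q : ℕ} (hq : 3 ≤ q) (hW : W ∈ Q⁰) (hw : 2 * w ∈ Q⁰)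
    (huv : u * v = 0) (hu : u ^ q = W * (v ^ 2 + 2 * w * u))
    (hv : v ^ q = W * (u ^ 2 + 2 * w * v)) : u = 0 := by
  have cancel_W {P : Q} : W * P = 0 → P = 0 := (mul_left_mem_nonZeroDivisors_eq_zero_iff hW).mp
  have cancel_w {P : Q} : 2 * w * P = 0 → P = 0 := (mul_left_mem_nonZeroDivisors_eq_zero_iff hw).mp
  have hu_vq : u * v ^ q = 0 := by
    rw [← pow_sub_one_mul (by omega : q ≠ 0), mul_left_comm, huv, mul_zero]
  have hv_uq : v * u ^ q = 0 := by
    rw [← pow_sub_one_mul (by omega : q ≠ 0), mul_left_comm, mul_comm v u, huv, mul_zero]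
  have hu3 : u ^ 3 = 0 := cancel_W (by linear_combination hu_vq - u * hv - 2 * W * w * huv)
  have hv3 : v ^ 3 = 0 := cancel_W (by linear_combination hv_uq - v * hu - 2 * W * w * huv)
  have hu' : v ^ 2 + 2 * w * u = 0 := cancel_W (hu ▸ pow_eq_zero_of_le hq hu3)
  have hv' : u ^ 2 + 2 * w * v = 0 := cancel_W (hv ▸ pow_eq_zero_of_le hq hv3)
  have hv2 : v ^ 2 = 0 := cancel_w (by linear_combination v * hv' - u * huv)
  exact cancel_w (by linear_combination hu' - hv2)

theorem eq_zero_of_pow_eq_self_sq {q : ℕ} (hq : 2 ≤ q) (hW : W ∈ Q⁰) (hw : 2 * w ∈ Q⁰)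
    (huv : u * v = 0) (hu : u ^ q = W * (u ^ 2 + 2 * w * v))
    (hv : v ^ q = W * (v ^ 2 + 2 * w * u)) : u = 0 := by
  have cancel_W {P : Q} : W * P = 0 → P = 0 := (mul_left_mem_nonZeroDivisors_eq_zero_iff hW).mp
  have cancel_w {P : Q} : 2 * w * P = 0 → P = 0 := (mul_left_mem_nonZeroDivisors_eq_zero_iff hw).mp
  have hv_uq : v * u ^ q = 0 := by
    rw [← pow_sub_one_mul (by omega : q ≠ 0), mul_left_comm, mul_comm v u, huv, mul_zero]
  have hv2 : v ^ 2 = 0 :=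
    cancel_w (cancel_W (by linear_combination hv_uq - v * hu - W * u * huv))
  have hv' : v ^ 2 + 2 * w * u = 0 := cancel_W (hv ▸ pow_eq_zero_of_le hq hv2)
  exact cancel_w (by linear_combination hv' - hv2)

theorem lagrangeResolvent_pow_eq (p r : ℕ) [ExpChar Q p]
    (hω : (ω ^ p ^ r) ^ 2 + ω ^ p ^ r + 1 = 0) (hx : x ^ p ^ r = 3 * W * x ^ 2)
    (hy : y ^ p ^ r = 3 * W * y ^ 2) (hz : z ^ p ^ r = 3 * W * z ^ 2) :
    lagrangeResolvent ω x y z ^ p ^ r =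
      W * (lagrangeResolvent ((ω ^ p ^ r) ^ 2) x y z ^ 2 +
        2 * (x + y + z) * lagrangeResolvent (ω ^ p ^ r) x y z) := by
  rw [← three_mul_lagrangeResolvent_sq hω, lagrangeResolvent_pow_char_pow, hx, hy, hz]
  unfold lagrangeResolvent
  ring

theorem lagrangeResolvent_eq_zero (p r : ℕ) [ExpChar Q p] (hq : 3 ≤ p ^ r) (hq3 : ¬ 3 ∣ p ^ r)
    (hω : ω ^ 2 + ω + 1 = 0) (h2 : (2 : Q) ∈ Q⁰) (hW : W ∈ Q⁰) (hw : x + y + z ∈ Q⁰)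
    (hwq : (x + y + z) ^ p ^ r = W * (x + y + z) ^ 2) (hx : x ^ p ^ r = 3 * W * x ^ 2)
    (hy : y ^ p ^ r = 3 * W * y ^ 2) (hz : z ^ p ^ r = 3 * W * z ^ 2) :
    lagrangeResolvent ω x y z = 0 := by
  have hω3 : ω ^ 3 = 1 := pow_three_eq_one_of_sq_add_self_add_one hω
  have hω4 : (ω ^ 2) ^ 2 = ω := by linear_combination ω * hω3
  have hω' : (ω ^ 2) ^ 2 + ω ^ 2 + 1 = 0 := by linear_combination hω + hω4
  have hmul : lagrangeResolvent ω x y z * lagrangeResolvent (ω ^ 2) x y z = 0 := by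
    refine (mul_left_mem_nonZeroDivisors_eq_zero_iff (mul_mem hW h2)).mp ?_
    rw [add_pow_expChar_pow, add_pow_expChar_pow] at hwq
    linear_combination W * two_mul_lagrangeResolvent_mul (x := x) (y := y) (z := z) hω +
      hwq - hx - hy - hz
  have h2w : 2 * (x + y + z) ∈ Q⁰ := mul_mem h2 hw
  have hωq : ω ^ p ^ r = ω ^ (p ^ r % 3) := pow_eq_pow_mod _ hω3
  have hω2q : (ω ^ 2) ^ p ^ r = (ω ^ (p ^ r % 3)) ^ 2 := by rw [pow_right_comm, hωq]
  have hpow := lagrangeResolvent_pow_eq (ω := ω) p r (x := x) (y := y) (z := z) (W := W)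
  have hpow' := lagrangeResolvent_pow_eq (ω := ω ^ 2) p r (x := x) (y := y) (z := z) (W := W)
  obtain hmod | hmod : p ^ r % 3 = 1 ∨ p ^ r % 3 = 2 := by omega
  · rw [hmod, pow_one] at hωq hω2q
    rw [hωq] at hpow
    rw [hω2q, hω4] at hpow'
    exact eq_zero_of_pow_eq_conjugate_sq hq hW h2w hmul (hpow hω hx hy hz)
      (hpow' (by rwa [hω4] at hω') hx hy hz)
  · rw [hmod] at hωq hω2q
    rw [hωq, hω4] at hpow
    rw [hω2q, hω4] at hpow'
    exact eq_zero_of_pow_eq_self_sq (by omega) hW h2w hmul (hpow (by rwa [hω4] at hω') hx hy hz)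
      (hpow' hω hx hy hz)

theorem eq_and_eq_of_pow_eq_three_mul_pow (p r : ℕ) [CharP Q p] (hpp : p.Prime) (hp : 3 < p)
    (hr : r ≠ 0) (hω : ω ^ 2 + ω + 1 = 0) (hxy : x + y ∈ Q⁰)
    (hx : x ^ (p ^ r - 2) = 3 * (x + y + z) ^ (p ^ r - 2))
    (hy : y ^ (p ^ r - 2) = 3 * (x + y + z) ^ (p ^ r - 2))
    (hz : z ^ (p ^ r - 2) = 3 * (x + y + z) ^ (p ^ r - 2)) : x = y ∧ y = z := by
  have : ExpChar Q p := .prime hpp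
  have hq : 3 < p ^ r := hp.trans_le (Nat.le_self_pow hr p)
  have hq3 : ¬ 3 ∣ p ^ r := fun h => by
    have := (Nat.prime_dvd_prime_iff_eq Nat.prime_three hpp).mp (Nat.prime_three.dvd_of_dvd_pow h)
    omega
  have h2 : (2 : Q) ∈ Q⁰ := ((CharP.isUnit_ofNat_iff hpp).mpr
    (Nat.not_dvd_of_pos_of_lt two_pos (by omega))).mem_nonZeroDivisors
  have h3 : (3 : Q) ∈ Q⁰ := ((CharP.isUnit_ofNat_iff hpp).mpr
    (Nat.not_dvd_of_pos_of_lt three_pos hp)).mem_nonZeroDivisors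
  have hW : (x + y + z) ^ (p ^ r - 2) ∈ Q⁰ :=
    mem_nonZeroDivisors_of_dvd_pow_of_dvd_pow (Dvd.intro_left _ hx.symm) (Dvd.intro_left _ hy.symm)
      hxy
  have hw : x + y + z ∈ Q⁰ := by
    rw [← mul_pow_sub_one (by omega : p ^ r - 2 ≠ 0)] at hW
    exact (mul_mem_nonZeroDivisors.mp hW).1
  have pow_eq (t : Q) : t ^ p ^ r = t ^ (p ^ r - 2) * t ^ 2 :=
    (pow_sub_mul_pow t (by omega)).symm
  have resolvent_eq_zero {ζ : Q} (hζ : ζ ^ 2 + ζ + 1 = 0) : lagrangeResolvent ζ x y z = 0 :=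
    lagrangeResolvent_eq_zero p r hq.le hq3 hζ h2 hW hw (pow_eq _) (hx ▸ pow_eq x) (hy ▸ pow_eq y)
      (hz ▸ pow_eq z)
  exact eq_and_eq_of_lagrangeResolvent_eq_zero h3 hω (resolvent_eq_zero hω)
    (resolvent_eq_zero (by linear_combination (ω ^ 2 - ω + 1) * hω))

end LagrangeResolvent

section MvPolynomial

variable {σ R : Type*} [CommRing R]

theorem order_le_totalDegree {P : MvPolynomial σ R} (hP : P ≠ 0) :
    (P : MvPowerSeries σ R).order ≤ P.totalDegree := by
  obtain ⟨d, hd⟩ := exists_coeff_ne_zero hP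
  exact (MvPowerSeries.order_le (by rwa [coeff_coe])).trans
    (Nat.cast_le.mpr (le_totalDegree (mem_support_iff.mpr hd)))

theorem isHomogeneous_totalDegree_of_le_order_s8 {P : MvPolynomial σ R}
    (hP : P.totalDegree ≤ (P : MvPowerSeries σ R).order) : P.IsHomogeneous P.totalDegree := by
  intro d hd
  rw [Pi.one_def, ← Finsupp.degree_eq_weight_one]
  refine (le_totalDegree (mem_support_iff.mpr hd)).antisymm (Nat.cast_le.mp (hP.trans ?_))
  exact MvPowerSeries.order_le (by rwa [coeff_coe])

theorem isHomogeneous_totalDegree_of_dvd [IsDomain R] {F G : MvPolynomial σ R} {n : ℕ}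
    (hF : F.IsHomogeneous n) (hF0 : F ≠ 0) (hGF : G ∣ F) : G.IsHomogeneous G.totalDegree := by
  obtain ⟨H, rfl⟩ := hGF
  have hG0 : G ≠ 0 := left_ne_zero_of_mul hF0
  have hH0 : H ≠ 0 := right_ne_zero_of_mul hF0
  apply isHomogeneous_totalDegree_of_le_order_s8
  refine (ENat.add_le_add_iff_right (ENat.natCast_ne_top H.totalDegree)).mp ?_
  calc (G.totalDegree + H.totalDegree : ℕ∞) = n := by
        rw [← Nat.cast_add, ← totalDegree_mul_of_isDomain hG0 hH0, hF.totalDegree hF0]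
    _ ≤ ((G * H : MvPolynomial σ R) : MvPowerSeries σ R).order :=
        MvPowerSeries.nat_le_order fun d hd => by rw [coeff_coe, hF.coeff_eq_zero hd.ne]
    _ = (G : MvPowerSeries σ R).order + (H : MvPowerSeries σ R).order := by
        rw [coe_mul, MvPowerSeries.order_mul]
    _ ≤ (G : MvPowerSeries σ R).order + H.totalDegree := by
        gcongr
        exact order_le_totalDegree hH0

theorem irreducible_of_isHomogeneous {k : Type*} [Field k] {F : MvPolynomial σ k} {n : ℕ}
    (hF : F.IsHomogeneous n) (hF0 : F ≠ 0) (hn : n ≠ 0)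
    (h : ∀ (G H : MvPolynomial σ k) (l m : ℕ), G.IsHomogeneous l → H.IsHomogeneous m →
      l ≠ 0 → m ≠ 0 → l + m = n → F ≠ G * H) : Irreducible F := by
  have isUnit_iff {P : MvPolynomial σ k} (hP : P ≠ 0) : IsUnit P ↔ P.totalDegree = 0 := by
    refine ⟨fun h => (isUnit_iff_totalDegree_of_isReduced.mp h).2, fun h => ?_⟩
    rw [totalDegree_eq_zero_iff_eq_C] at h
    rw [h, Ne, C_eq_zero] at hP
    exact h ▸ (IsUnit.mk0 _ hP).map C
  refine ⟨by rwa [isUnit_iff hF0, hF.totalDegree hF0], fun G H hGH => ?_⟩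
  have hGH0 : G * H ≠ 0 := hGH ▸ hF0
  have hG0 : G ≠ 0 := left_ne_zero_of_mul hGH0
  have hH0 : H ≠ 0 := right_ne_zero_of_mul hGH0
  rw [isUnit_iff hG0, isUnit_iff hH0]
  by_contra! hdeg
  refine h G H _ _ (isHomogeneous_totalDegree_of_dvd hF hF0 (Dvd.intro _ hGH.symm))
    (isHomogeneous_totalDegree_of_dvd hF hF0 (Dvd.intro_left _ hGH.symm)) hdeg.1 hdeg.2 ?_ hGH
  rw [← totalDegree_mul_of_isDomain hG0 hH0, ← hGH, hF.totalDegree hF0]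

theorem isLocalHom_map_of_injective {S : Type*} [CommRing S] [IsReduced R] [IsReduced S]
    {f : R →+* S} [IsLocalHom f] (hf : Function.Injective f) :
    IsLocalHom (MvPolynomial.map (σ := σ) f) := by
  constructor
  intro P hP
  rw [isUnit_iff_totalDegree_of_isReduced, coeff_map] at hP
  rw [isUnit_iff_totalDegree_of_isReduced]
  refine ⟨hP.1.of_map, ?_⟩
  rw [← hP.2, totalDegree, totalDegree, support_map_of_injective _ hf]

theorem aeval_sub_aeval_mem {A : Type*} [CommRing A] [Algebra R A] {I : Ideal A} {f g : σ → A}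
    (hfg : ∀ i, f i - g i ∈ I) (P : MvPolynomial σ R) : aeval f P - aeval g P ∈ I := by
  rw [← Ideal.Quotient.eq, ← Ideal.Quotient.mkₐ_eq_mk R, ← AlgHom.comp_apply, ← AlgHom.comp_apply]
  congr 1
  ext i
  simpa using Ideal.Quotient.eq.mpr (hfg i)

theorem pderiv_mem_span_pair_mul (i : σ) (G H : MvPolynomial σ R) :
    pderiv i (G * H) ∈ Ideal.span {G, H} := by
  rw [pderiv_mul]
  exact Ideal.mem_span_pair.mpr ⟨pderiv i H, pderiv i G, by ring⟩

theorem dvd_pderiv_of_mul_self_dvd {F P : MvPolynomial σ R} (h : P * P ∣ F) (i : σ) :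
    P ∣ pderiv i F := by
  obtain ⟨E, rfl⟩ := h
  refine ⟨pderiv i P * E + pderiv i P * E + P * pderiv i E, ?_⟩
  simp only [pderiv_mul]
  ring

theorem squarefree_X_pow_sub_X_pow {k : Type*} [Field k] {i j : σ} (hij : i ≠ j) {n : ℕ}
    (hn : (n : k) ≠ 0) : Squarefree (X i ^ n - X j ^ n : MvPolynomial σ k) := by
  intro P hP
  have hu : IsUnit (n : MvPolynomial σ k) := by simpa using (IsUnit.mk0 _ hn).map C
  have hi : P ∣ X i ^ (n - 1) := by
    have := dvd_pderiv_of_mul_self_dvd hP i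
    rwa [map_sub, pderiv_pow, pderiv_pow, pderiv_X_self, pderiv_X_of_ne hij.symm, mul_zero,
      sub_zero, mul_one, hu.dvd_mul_left] at this
  have hj : P ∣ X j ^ (n - 1) := by
    have := dvd_pderiv_of_mul_self_dvd hP j
    rwa [map_sub, pderiv_pow, pderiv_pow, pderiv_X_self, pderiv_X_of_ne hij, mul_zero,
      zero_sub, mul_one, dvd_neg, hu.dvd_mul_left] at this
  have hrel : IsRelPrime (X i : MvPolynomial σ k) (X j) :=
    (X_prime (R := k) (i := i)).irreducible.isRelPrime_iff_not_dvd.mpr (mt X_dvd_X.mp hij)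
  exact hrel.pow hi hj

theorem exists_constantCoeff_pderiv_eq_mul {G H L : MvPolynomial σ R}
    (hG : constantCoeff G = 0) (hH : constantCoeff H = 0)
    (hdH : ∀ i, constantCoeff (pderiv i H) = 0) (hL : L ∈ Ideal.span {G, H}) :
    ∃ c, ∀ i, constantCoeff (pderiv i L) = c * constantCoeff (pderiv i G) := by
  obtain ⟨A, B, rfl⟩ := Ideal.mem_span_pair.mp hL
  refine ⟨constantCoeff A, fun i => ?_⟩
  simp only [map_add, pderiv_mul, map_mul, hG, hH, hdH, mul_zero, zero_add, add_zero]

theorem constantCoeff_eq_zero_of_isHomogeneous {P : MvPolynomial σ R} {n : ℕ}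
    (hP : P.IsHomogeneous n) (hn : n ≠ 0) : constantCoeff P = 0 :=
  hP.coeff_eq_zero (by simpa using hn.symm)

theorem X_sub_X_notMem_span_pair_of_isHomogeneous [Nontrivial R] {G H : MvPolynomial σ R} {m n : ℕ}
    (hG : G.IsHomogeneous m) (hm : m ≠ 0) (hH : H.IsHomogeneous n) (hn : 2 ≤ n) {i j l : σ}
    (hij : i ≠ j) (hil : i ≠ l) (hjl : j ≠ l) (hL : X i - X j ∈ Ideal.span {G, H}) :
    X j - X l ∉ Ideal.span {G, H} := by
  intro hL'
  have gradient_eq {L : MvPolynomial σ R} (hL : L ∈ Ideal.span {G, H}) :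
      ∃ c, ∀ i, constantCoeff (pderiv i L) = c * constantCoeff (pderiv i G) :=
    exists_constantCoeff_pderiv_eq_mul (constantCoeff_eq_zero_of_isHomogeneous hG hm)
      (constantCoeff_eq_zero_of_isHomogeneous hH (by omega))
      (fun _ => constantCoeff_eq_zero_of_isHomogeneous hH.pderiv (by omega)) hL
  obtain ⟨a, ha⟩ := gradient_eq hL
  obtain ⟨b, hb⟩ := gradient_eq hL'
  have hai := ha i
  have hbi := hb i
  have hbj := hb j
  simp only [map_sub, pderiv_X_self, pderiv_X_of_ne hij.symm,
    pderiv_X_of_ne hil.symm, pderiv_X_of_ne hjl.symm, map_one, map_zero, sub_zero]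
    at hai hbi hbj
  refine one_ne_zero (α := R) ?_
  linear_combination hai + a * constantCoeff (pderiv i G) * hbj -
    a * constantCoeff (pderiv j G) * hbi

end MvPolynomial

section SpecialForm

variable (R : Type*) [CommRing R]

/-- The form `x ^ n + y ^ n + z ^ n - 3 * (x + y + z) ^ n`, whose zero locus for `n = q - 1` is the
curve `C` of the theorem. -/
noncomputable def specialForm (n : ℕ) : MvPolynomial (Fin 3) R :=
  X 0 ^ n + X 1 ^ n + X 2 ^ n - 3 * (X 0 + X 1 + X 2) ^ n

theorem isHomogeneous_specialForm (n : ℕ) : (specialForm R n).IsHomogeneous n := by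
  have hX (i : Fin 3) : (X i : MvPolynomial (Fin 3) R).IsHomogeneous 1 := isHomogeneous_X R i
  have hX_pow (i : Fin 3) : (X i ^ n : MvPolynomial (Fin 3) R).IsHomogeneous n :=
    isHomogeneous_X_pow i n
  have hsum : ((X 0 + X 1 + X 2) ^ n : MvPolynomial (Fin 3) R).IsHomogeneous n := by
    simpa only [one_mul] using (((hX 0).add (hX 1)).add (hX 2)).pow n
  have hsum3 := hsum.C_mul 3
  rw [map_ofNat] at hsum3
  exact (((hX_pow 0).add (hX_pow 1)).add (hX_pow 2)).sub hsum3

theorem pderiv_specialForm (n : ℕ) (i : Fin 3) :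
    pderiv i (specialForm R n) =
      (n : MvPolynomial (Fin 3) R) * (X i ^ (n - 1) - 3 * (X 0 + X 1 + X 2) ^ (n - 1)) := by
  have h3 : (3 : MvPolynomial (Fin 3) R) = C 3 := by rw [map_ofNat]
  rw [specialForm, h3]
  simp only [map_sub, map_add, pderiv_C_mul, pderiv_pow]
  fin_cases i <;> simp <;> ring

/-- Restriction of ternary forms to the line `x + y = 0`, with coordinates `x` and `z` on it. -/
noncomputable def restrictLine : MvPolynomial (Fin 3) R →ₐ[R] MvPolynomial (Fin 2) R :=
  aeval ![X 0, -X 0, X 1]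

variable {R}

theorem map_specialForm {S : Type*} [CommRing S] (f : R →+* S) (n : ℕ) :
    MvPolynomial.map f (specialForm R n) = specialForm S n := by
  simp only [specialForm, map_sub, map_add, map_mul, map_pow, map_X, map_ofNat]

theorem specialForm_ne_zero {n : ℕ} (h2 : (2 : R) ≠ 0) (hn : n ≠ 0) : specialForm R n ≠ 0 := by
  intro h
  have heval : (1 - 3 : R) = 0 := by
    simpa [specialForm, hn] using congrArg (eval ![1, 0, 0]) h
  exact h2 (by linear_combination -heval)

theorem restrictLine_surjective : Function.Surjective (restrictLine R) := by
  intro P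
  refine ⟨aeval ![X 0, X 2] P, ?_⟩
  suffices (restrictLine R).comp (aeval ![X 0, X 2]) = .id R _ from DFunLike.congr_fun this P
  ext i : 1
  fin_cases i <;> simp [restrictLine]

theorem ker_restrictLine :
    RingHom.ker (restrictLine R : MvPolynomial (Fin 3) R →+* MvPolynomial (Fin 2) R) =
      Ideal.span {X 0 + X 1} := by
  refine le_antisymm (fun P hP => ?_) ?_
  · have hcomp : aeval ![X 0, -X 0, X 2] P =
        (aeval ![X 0, X 2] (restrictLine R P) : MvPolynomial (Fin 3) R) := by
      suffices (aeval ![X 0, -X 0, X 2] : MvPolynomial (Fin 3) R →ₐ[R] MvPolynomial (Fin 3) R) =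
          (aeval ![X 0, X 2]).comp (restrictLine R) from DFunLike.congr_fun this P
      ext i : 1
      fin_cases i <;> simp [restrictLine]
    have := aeval_sub_aeval_mem (R := R) (f := X) (g := ![X 0, -X 0, X 2])
      (I := Ideal.span {(X 0 + X 1 : MvPolynomial (Fin 3) R)}) ?_ P
    · have hP0 : restrictLine R P = 0 := hP
      rwa [hcomp, hP0, map_zero, sub_zero, aeval_X_left_apply] at this
    · intro i
      rw [Ideal.mem_span_singleton]
      fin_cases i <;> simp [add_comm (X 1 : MvPolynomial (Fin 3) R)]
  · rw [Ideal.span_singleton_le_iff_mem, RingHom.mem_ker]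
    simp [restrictLine]

theorem restrictLine_specialForm {n : ℕ} (hn : Even n) :
    restrictLine R (specialForm R n) = 2 * (X 0 ^ n - X 1 ^ n) := by
  have hsubst : restrictLine R (specialForm R n) =
      X 0 ^ n + (-X 0) ^ n + X 1 ^ n - 3 * (X 0 + -X 0 + X 1) ^ n := by
    simp only [restrictLine, specialForm, map_sub, map_add, map_mul, map_pow, map_ofNat, aeval_X,
      Matrix.cons_val]
  rw [hsubst, hn.neg_pow, add_neg_cancel, zero_add]
  ring

variable {k : Type*} [Field k]

theorem squarefree_restrictLine_specialForm {n : ℕ} (hn : Even n) (h2 : (2 : k) ≠ 0)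
    (hn0 : (n : k) ≠ 0) : Squarefree (restrictLine k (specialForm k n)) := by
  have hu : IsUnit (2 : MvPolynomial (Fin 2) k) := by
    simpa only [map_ofNat] using (IsUnit.mk0 _ h2).map C
  rw [restrictLine_specialForm hn, (associated_unit_mul_left _ _ hu).squarefree_iff]
  exact squarefree_X_pow_sub_X_pow zero_ne_one hn0

theorem mk_X_add_X_mem_nonZeroDivisors {G H : MvPolynomial (Fin 3) k}
    (hGH : Squarefree (restrictLine k (G * H))) :
    Ideal.Quotient.mk (Ideal.span {G, H}) (X 0 + X 1) ∈
      (MvPolynomial (Fin 3) k ⧸ Ideal.span {G, H})⁰ := by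
  have hX : (X 0 + X 1 : MvPolynomial (Fin 3) k) ≠ 0 := fun h => by
    simpa using congrArg (eval ![1, 0, 0]) h
  rw [map_mul] at hGH
  exact mk_mem_nonZeroDivisors_of_isRelPrime_map restrictLine_surjective
    (mem_nonZeroDivisors_of_ne_zero hX) ker_restrictLine (squarefree_mul_iff.mp hGH).1
    (right_ne_zero_of_mul hGH.ne_zero)

theorem X_pow_sub_mem_span_pair_of_mul_eq_specialForm {n : ℕ} (hn0 : (n : k) ≠ 0)
    {G H : MvPolynomial (Fin 3) k} (hGH : G * H = specialForm k n) (i : Fin 3) :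
    X i ^ (n - 1) - 3 * (X 0 + X 1 + X 2) ^ (n - 1) ∈ Ideal.span {G, H} := by
  have hu : IsUnit (n : MvPolynomial (Fin 3) k) := by
    simpa only [map_natCast] using (IsUnit.mk0 _ hn0).map C
  have := pderiv_mem_span_pair_mul i G H
  rwa [hGH, pderiv_specialForm, Ideal.unit_mul_mem_iff_mem _ hu] at this

theorem X_sub_X_mem_span_pair_of_mul_eq_specialForm (p r : ℕ) [CharP k p] (hp : 3 < p)
    (hr : r ≠ 0) {ω : k} (hω : ω ^ 2 + ω + 1 = 0) {G H : MvPolynomial (Fin 3) k}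
    (hGH : G * H = specialForm k (p ^ r - 1)) :
    X 0 - X 1 ∈ Ideal.span {G, H} ∧ X 1 - X 2 ∈ Ideal.span {G, H} := by
  obtain hI | hI := subsingleton_or_nontrivial (MvPolynomial (Fin 3) k ⧸ Ideal.span {G, H})
  · rw [Ideal.Quotient.subsingleton_iff] at hI
    simp only [hI, Submodule.mem_top, and_self]
  have : CharP (MvPolynomial (Fin 3) k ⧸ Ideal.span {G, H}) p :=
    charP_of_injective_algebraMap (algebraMap k _).injective p
  have hpp : p.Prime := (CharP.char_is_prime_or_zero k p).resolve_right (by omega)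
  have hodd : Odd p := hpp.odd_of_ne_two (by omega)
  have hq : 1 < p ^ r := Nat.one_lt_pow hr hpp.one_lt
  have hn0 : ((p ^ r - 1 : ℕ) : k) ≠ 0 := by simp [Nat.cast_sub hq.le, hr]
  have h2 : (2 : k) ≠ 0 := Ring.two_ne_zero (by rw [ringChar.eq k p]; omega)
  have hn : Even (p ^ r - 1) := Nat.Odd.sub_odd hodd.pow odd_one
  have hxy := mk_X_add_X_mem_nonZeroDivisors (hGH ▸ squarefree_restrictLine_specialForm hn h2 hn0)
  have hX (i : Fin 3) :=
    Ideal.Quotient.eq.mpr (X_pow_sub_mem_span_pair_of_mul_eq_specialForm hn0 hGH i)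
  simp only [map_mul, map_pow, map_add, map_ofNat] at hX hxy
  have hω' := congrArg (algebraMap k (MvPolynomial (Fin 3) k ⧸ Ideal.span {G, H})) hω
  simp only [map_pow, map_add, map_one, map_zero] at hω'
  have := eq_and_eq_of_pow_eq_three_mul_pow p r hpp hp hr hω' hxy (hX 0) (hX 1) (hX 2)
  rwa [Ideal.Quotient.eq, Ideal.Quotient.eq] at this

theorem irreducible_specialForm_of_sq_add_self_add_one_eq_zero (p r : ℕ) [CharP k p] (hp : 3 < p)
    (hr : r ≠ 0) {ω : k} (hω : ω ^ 2 + ω + 1 = 0) : Irreducible (specialForm k (p ^ r - 1)) := by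
  have hq : p ≤ p ^ r := Nat.le_self_pow hr p
  have h2 : (2 : k) ≠ 0 := Ring.two_ne_zero (by rw [ringChar.eq k p]; omega)
  refine irreducible_of_isHomogeneous (isHomogeneous_specialForm k _)
    (specialForm_ne_zero h2 (by omega)) (by omega) fun G H l m hG hH hl hm hlm hGH => ?_
  obtain ⟨hL, hL'⟩ := X_sub_X_mem_span_pair_of_mul_eq_specialForm p r hp hr hω hGH.symm
  obtain hm2 | hl2 : 2 ≤ m ∨ 2 ≤ l := by omega
  · exact X_sub_X_notMem_span_pair_of_isHomogeneous hG hl hH hm2 (by decide) (by decide)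
      (by decide) hL hL'
  · rw [Set.pair_comm] at hL hL'
    exact X_sub_X_notMem_span_pair_of_isHomogeneous hH hm hG hl2 (by decide) (by decide)
      (by decide) hL hL'

end SpecialForm

theorem exists_sq_add_self_add_one_eq_zero (k : Type*) [Field k] [IsAlgClosed k] :
    ∃ ω : k, ω ^ 2 + ω + 1 = 0 := by
  obtain ⟨ω, hω⟩ := IsAlgClosed.exists_root (Polynomial.cyclotomic 3 k)
    (Polynomial.degree_cyclotomic_pos 3 k three_pos).ne'
  exact ⟨ω, by simpa [Polynomial.cyclotomic_three] using hω⟩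

theorem special_curve_geometrically_irreducible_general {k : Type*} [Field k] (p r : ℕ) [CharP k p]
    (hp : 3 < p) (hr : r ≠ 0) :
    Irreducible
      (X 0 ^ (p ^ r - 1) + X 1 ^ (p ^ r - 1) + X 2 ^ (p ^ r - 1)
        - 3 * (X 0 + X 1 + X 2) ^ (p ^ r - 1) : MvPolynomial (Fin 3) k) := by
  have : CharP (AlgebraicClosure k) p :=
    charP_of_injective_algebraMap (algebraMap k _).injective p
  obtain ⟨ω, hω⟩ := exists_sq_add_self_add_one_eq_zero (AlgebraicClosure k)
  have hirr := irreducible_specialForm_of_sq_add_self_add_one_eq_zero p r hp hr hω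
  rw [← map_specialForm (algebraMap k (AlgebraicClosure k))] at hirr
  have := isLocalHom_map_of_injective (σ := Fin 3) (algebraMap k (AlgebraicClosure k)).injective
  exact hirr.of_map

theorem special_curve_geometrically_irreducible
    (K : Type*) [Field K] [Fintype K] (hp : 3 < ringChar K) :
    Irreducible
      (X 0 ^ (Fintype.card K - 1) + X 1 ^ (Fintype.card K - 1) + X 2 ^ (Fintype.card K - 1)
        - 3 * (X 0 + X 1 + X 2) ^ (Fintype.card K - 1) :
        MvPolynomial (Fin 3) (AlgebraicClosure K)) := by
  have : CharP (AlgebraicClosure K) (ringChar K) :=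
    charP_of_injective_algebraMap (algebraMap K _).injective _
  obtain ⟨r, -, hcard⟩ := FiniteField.card K (ringChar K)
  rw [hcard]
  exact special_curve_geometrically_irreducible_general (ringChar K) r hp r.ne_zero
end

section
/- Let q be a prime power and let 𝔽 be the finite field with q² elements. The Hermitian curve H defined by x^{q+1} + y^{q+1} + z^{q+1} = 0 has exactly q³ + 1 points in ℙ²(𝔽): the number of points [x:y:z] ∈ ℙ²(𝔽) with x^{q+1} + y^{q+1} + z^{q+1} = 0 equals q³ + 1. -/
open MvPolynomial

/-!
On a field `K` with `q ^ 2` elements, `x ↦ x ^ (q + 1)` is the norm to the fixed field of the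
involution `x ↦ x ^ q`. As `Kˣ` is cyclic, every nonzero fixed element is the norm of exactly
`q + 1` elements, whereas `0` is the norm of `0` only. The form `∑ i, v i ^ (q + 1)` takes fixed
values, so solving for the first coordinate gives, for the number `N n` of its zeros in `K ^ n`,
the recurrence `N (n + 1) + q * N n = (q + 1) * q ^ (2 * n)`. Each projective zero accounts for
`q ^ 2 - 1` nonzero vectors.
-/

section CyclicGroup

variable {G : Type*} [CommGroup G] [IsCyclic G] [Finite G] {d m : ℕ}

theorem range_powMonoidHom_eq_ker_powMonoidHom (hG : Nat.card G = d * m) :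
    (powMonoidHom d : G →* G).range = (powMonoidHom m : G →* G).ker := by
  have hd : 0 < d := Nat.pos_of_mul_pos_right (hG ▸ Nat.card_pos)
  refine Subgroup.eq_of_le_of_card_ge ?_ ?_
  · rintro _ ⟨g, rfl⟩
    simp [MonoidHom.mem_ker, ← pow_mul, ← hG]
  · rw [IsCyclic.card_powMonoidHom_range, IsCyclic.card_powMonoidHom_ker, hG,
      Nat.gcd_mul_left_left, Nat.gcd_mul_right_left, Nat.mul_div_cancel_left _ hd]

theorem card_pow_eq_of_isCyclic (hG : Nat.card G = d * m) {s : G} (hs : s ^ m = 1) :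
    Nat.card {g : G // g ^ d = s} = d := by
  obtain ⟨g, rfl⟩ : s ∈ (powMonoidHom d : G →* G).range := by
    rwa [range_powMonoidHom_eq_ker_powMonoidHom hG, MonoidHom.mem_ker]
  calc Nat.card {h : G // h ^ d = powMonoidHom d g}
      = Nat.card (powMonoidHom d : G →* G).ker :=
        Nat.card_congr ((powMonoidHom d : G →* G).fiberEquivKer g)
    _ = d := by rw [IsCyclic.card_powMonoidHom_ker, hG, Nat.gcd_mul_right_left]

theorem card_pow_eq_of_card_units {M : Type*} [CommGroupWithZero M] [IsCyclic Mˣ] [Finite M]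
    (hM : Nat.card Mˣ = d * m) {s : M} (hs₀ : s ≠ 0) (hs : s ^ m = 1) :
    Nat.card {x : M // x ^ d = s} = d := by
  have hd : d ≠ 0 := by
    rintro rfl
    exact Nat.card_pos.ne' (hM.trans (zero_mul m))
  have hx₀ (x : {x : M // x ^ d = s}) : x.1 ≠ 0 := by
    intro hx
    exact hs₀ (by rw [← x.2, hx, zero_pow hd])
  let e : {x : M // x ^ d = s} ≃ {u : Mˣ // u ^ d = Units.mk0 s hs₀} :=
    { toFun := fun x ↦ ⟨Units.mk0 x (hx₀ x), Units.ext (by simpa using x.2)⟩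
      invFun := fun u ↦ ⟨u.1, by simpa using congrArg Units.val u.2⟩
      left_inv := fun _ ↦ rfl
      right_inv := fun u ↦ Subtype.ext (Units.ext rfl) }
  rw [Nat.card_congr e]
  exact card_pow_eq_of_isCyclic hM (Units.ext (by simpa using hs))

end CyclicGroup

section Projectivization

open scoped LinearAlgebra.Projectivization

variable {K V : Type*} [DivisionRing K] [AddCommGroup V] [Module K V]

theorem bijective_units_smul_rep :
    Function.Bijective fun x : ℙ K V × Kˣ ↦
      (⟨x.2 • x.1.rep, (smul_ne_zero_iff_ne x.2).2 x.1.rep_nonzero⟩ : {v : V // v ≠ 0}) := by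
  constructor
  · rintro ⟨P, a⟩ ⟨Q, b⟩ h
    have h : a • P.rep = b • Q.rep := congrArg Subtype.val h
    obtain rfl : P = Q := by
      rw [← P.mk_rep, ← Q.mk_rep, Projectivization.mk_eq_mk_iff]
      exact ⟨a⁻¹ * b, by rw [mul_smul, ← h, inv_smul_smul]⟩
    obtain rfl : a = b := Units.ext (smul_left_injective K P.rep_nonzero h)
    rfl
  · rintro ⟨v, hv⟩
    obtain ⟨a, ha⟩ := Projectivization.exists_smul_eq_mk_rep K v hv
    exact ⟨(Projectivization.mk K v hv, a⁻¹), Subtype.ext (inv_smul_eq_iff.2 ha.symm)⟩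

theorem card_subtype_eq_card_projectivization_mul_add_one [Finite V] {p : V → Prop} (hp₀ : p 0)
    (hp : ∀ (a : Kˣ) (v : V), p (a • v) ↔ p v) :
    Nat.card {v // p v} = Nat.card {P : ℙ K V // p P.rep} * Nat.card Kˣ + 1 := by
  have hnonzero : Nat.card {v : V // v ≠ 0 ∧ p v} =
      Nat.card {P : ℙ K V // p P.rep} * Nat.card Kˣ := by
    let e : {x : ℙ K V × Kˣ // p x.1.rep} ≃ {v : {v : V // v ≠ 0} // p v} :=
      (Equiv.ofBijective _ bijective_units_smul_rep).subtypeEquiv fun x ↦ (hp x.2 x.1.rep).symm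
    rw [← Nat.card_prod]
    exact Nat.card_congr <| (Equiv.subtypeSubtypeEquivSubtypeInter (· ≠ 0) p).symm.trans <|
      e.symm.trans (Equiv.prodSubtypeFstEquivSubtypeProd (p := fun P : ℙ K V ↦ p P.rep))
  rw [← hnonzero]
  calc Nat.card {v // p v}
      = ({v | p v} \ {0}).ncard + 1 := (Set.ncard_sdiff_singleton_add_one hp₀).symm
    _ = Nat.card {v : V // v ≠ 0 ∧ p v} + 1 :=
        congrArg (· + 1) (Nat.card_congr (Equiv.subtypeEquivRight fun _ ↦ and_comm))

end Projectivization

section HermitianForm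

/-- The diagonal Hermitian form `∑ i, v i * (v i) ^ q` of a vector `v`, where `x ↦ x ^ q` is
the conjugation of a field with `q ^ 2` elements. -/
def hermitianForm {ι R : Type*} [Fintype ι] [Semiring R] (q : ℕ) (v : ι → R) : R :=
  ∑ i, v i ^ (q + 1)

theorem hermitianForm_zero {ι R : Type*} [Fintype ι] [Semiring R] (q : ℕ) :
    hermitianForm q (0 : ι → R) = 0 := by
  simp [hermitianForm]

theorem hermitianForm_smul {ι R : Type*} [Fintype ι] [CommSemiring R] (q : ℕ) (a : R)
    (v : ι → R) : hermitianForm q (a • v) = a ^ (q + 1) * hermitianForm q v := by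
  simp [hermitianForm, mul_pow, Finset.mul_sum]

theorem hermitianForm_cons {R : Type*} [Semiring R] (q : ℕ) {n : ℕ} (a : R) (v : Fin n → R) :
    hermitianForm q (Fin.cons a v : Fin (n + 1) → R) = a ^ (q + 1) + hermitianForm q v := by
  simp [hermitianForm, Fin.sum_univ_succ]

end HermitianForm

section FiniteField

variable {K : Type*} [Field K] [Fintype K] {q : ℕ}

theorem exists_ringHom_eq_pow_of_card_eq_pow {n : ℕ} (hK : Fintype.card K = q ^ n) :
    ∃ φ : K →+* K, ∀ x, φ x = x ^ q := by
  have hn : n ≠ 0 := by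
    rintro rfl
    exact Fintype.one_lt_card.ne' hK
  obtain ⟨p, k, hp, -, rfl⟩ := (isPrimePow_pow_iff hn).1 (hK ▸ FiniteField.isPrimePow_card K)
  have : Fact p.Prime := ⟨hp.nat_prime⟩
  have : CharP K p := charP_of_card_eq_prime_pow (hK.trans (pow_mul p k n).symm)
  exact ⟨iterateFrobenius K p k, iterateFrobenius_def p k⟩

theorem hermitianForm_pow_eq_self {ι : Type*} [Fintype ι] (hK : Fintype.card K = q ^ 2)
    (v : ι → K) : hermitianForm q v ^ q = hermitianForm q v := by
  obtain ⟨φ, hφ⟩ := exists_ringHom_eq_pow_of_card_eq_pow hK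
  have hinv (x : K) : (x ^ q) ^ q = x := by rw [← pow_mul, ← sq, ← hK, FiniteField.pow_card]
  rw [← hφ, hermitianForm, map_sum]
  refine Finset.sum_congr rfl fun i _ ↦ ?_
  rw [hφ, pow_succ, mul_pow, hinv, mul_comm]

theorem card_pow_eq_of_pow_eq_self (hK : Fintype.card K = q ^ 2) {s : K} (hs : s ^ q = s)
    (hs₀ : s ≠ 0) : Nat.card {x : K // x ^ (q + 1) = s} = q + 1 := by
  have hq : q ≠ 0 := by
    rintro rfl
    simp at hK
  have hunits : Nat.card Kˣ = (q + 1) * (q - 1) := by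
    rw [Nat.card_units, Nat.card_eq_fintype_card, hK, ← Nat.sq_sub_sq, one_pow]
  refine card_pow_eq_of_card_units hunits hs₀ (mul_right_cancel₀ hs₀ ?_)
  rw [pow_sub_one_mul hq, hs, one_mul]

theorem card_hermitianForm_cons_eq_zero [DecidableEq K] (hK : Fintype.card K = q ^ 2) {n : ℕ}
    (w : Fin n → K) :
    Nat.card {a : K // hermitianForm q (Fin.cons a w : Fin (n + 1) → K) = 0} +
      q * (if hermitianForm q w = 0 then 1 else 0) = q + 1 := by
  simp only [hermitianForm_cons, add_eq_zero_iff_eq_neg]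
  split_ifs with hw
  · simp [hw, add_comm]
  · have hfix : (-hermitianForm q w) ^ q = -hermitianForm q w := by
      obtain ⟨φ, hφ⟩ := exists_ringHom_eq_pow_of_card_eq_pow hK
      rw [← hφ, map_neg, hφ, hermitianForm_pow_eq_self hK]
    rw [card_pow_eq_of_pow_eq_self hK hfix (neg_ne_zero.2 hw), mul_zero, add_zero]

theorem card_hermitianForm_eq_zero_succ_add (hK : Fintype.card K = q ^ 2) (n : ℕ) :
    Nat.card {v : Fin (n + 1) → K // hermitianForm q v = 0} +
      q * Nat.card {w : Fin n → K // hermitianForm q w = 0} = (q + 1) * q ^ (2 * n) := by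
  classical
  let e : {v : Fin (n + 1) → K // hermitianForm q v = 0} ≃
      Σ w : Fin n → K, {a : K // hermitianForm q (Fin.cons a w : Fin (n + 1) → K) = 0} :=
    (((Fin.consEquiv fun _ ↦ K).symm.trans (Equiv.prodComm _ _)).subtypeEquiv fun v ↦ by
      simp [Fin.consEquiv]).trans (Equiv.subtypeProdEquivSigmaSubtype fun w a ↦
        hermitianForm q (Fin.cons a w : Fin (n + 1) → K) = 0)
  rw [Nat.card_congr e, Nat.card_sigma, Nat.card_eq_fintype_card (α := {w // _}),
    Fintype.card_subtype, Finset.card_filter, Finset.mul_sum, ← Finset.sum_add_distrib]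
  simp only [card_hermitianForm_cons_eq_zero hK, Finset.sum_const, Finset.card_univ,
    Fintype.card_pi_const, hK, smul_eq_mul]
  ring

theorem card_hermitianForm_eq_zero (hK : Fintype.card K = q ^ 2) (n : ℕ) :
    (Nat.card {v : Fin (n + 1) → K // hermitianForm q v = 0} : ℤ) =
      q ^ (2 * n + 1) - (-1) ^ n * (q - 1) * q ^ n := by
  induction n with
  | zero =>
    have h := card_hermitianForm_eq_zero_succ_add hK 0
    have h₀ : Nat.card {w : Fin 0 → K // hermitianForm q w = 0} = 1 := by simp [hermitianForm]
    rw [h₀] at h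
    zify at h
    linear_combination h
  | succ n ih =>
    have h := card_hermitianForm_eq_zero_succ_add hK (n + 1)
    zify at h
    linear_combination h - q * ih

theorem hermitian_curve_point_count_general (hK : Fintype.card K = q ^ 2) (n : ℕ) :
    (Nat.card {P : Projectivization K (Fin (n + 1) → K) //
        eval P.rep (∑ i, X i ^ (q + 1) : MvPolynomial (Fin (n + 1)) K) = 0} : ℤ) * (q ^ 2 - 1) =
      (q ^ (n + 1) + (-1) ^ n) * (q ^ n - (-1) ^ n) := by
  have hcone := card_subtype_eq_card_projectivization_mul_add_one (K := K)
    (p := fun v : Fin (n + 1) → K ↦ hermitianForm q v = 0) (hermitianForm_zero q) fun a v ↦ by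
      rw [Units.smul_def, hermitianForm_smul, mul_eq_zero_iff_left (pow_ne_zero _ a.ne_zero)]
  have hunits : (Nat.card Kˣ : ℤ) = q ^ 2 - 1 := by
    rw [Nat.card_units, Nat.card_eq_fintype_card, Nat.cast_pred Fintype.card_pos, hK, Nat.cast_pow]
  have hsign : ((-1) ^ n * (-1) ^ n : ℤ) = 1 := by rw [← mul_pow]; simp
  have haffine := card_hermitianForm_eq_zero hK n
  rw [hcone] at haffine
  push_cast [hunits, hermitianForm] at haffine
  simp only [map_sum, map_pow, eval_X]
  linear_combination haffine + hsign

end FiniteField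

theorem hermitian_curve_point_count
    (q : ℕ) (hq : IsPrimePow q)
    (K : Type*) [Field K] [Fintype K] (hcard : Fintype.card K = q ^ 2) :
    Nat.card {P : Projectivization K (Fin 3 → K) //
        eval P.rep (X 0 ^ (q + 1) + X 1 ^ (q + 1) + X 2 ^ (q + 1) : MvPolynomial (Fin 3) K) = 0}
      = q ^ 3 + 1 := by
  have h := hermitian_curve_point_count_general hcard 2
  rw [Fin.sum_univ_three] at h
  have hq2 : (q ^ 2 - 1 : ℤ) ≠ 0 :=
    sub_ne_zero.2 (mod_cast (one_lt_pow₀ hq.one_lt two_ne_zero).ne')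
  zify
  exact mul_right_cancel₀ hq2 (by linear_combination h)
end
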